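/- Let Δ = {x ∈ ℝⁿ : x ≥ 0, 1ᵀx = 1} be the standard simplex with Euclidean projection Π_Δ, and let μ, v ∈ ℝⁿ. Define φ : ℝ → ℝ by φ(ν) = μᵀ Π_Δ(v + ν·μ). Then φ is nondecreasing and continuous on ℝ. -/

import Mathlib

/-- The standard probability simplex `Δ = {x : x ≥ 0, 1ᵀx = 1}` in Euclidean space. -/
def stdSimplex' (n : ℕ) : Set (EuclideanSpace ℝ (Fin n)) :=
  {x | (∀ i, 0 ≤ x i) ∧ (∑ i, x i) = 1}

open scoped RealInnerProductSpace

theorem convex_stdSimplex' (n : ℕ) : Convex ℝ (stdSimplex' n) := by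
  intro x hx y hy a b ha hb hab
  refine ⟨fun i => ?_, ?_⟩
  · have := hx.1 i
    have := hy.1 i
    simp only [PiLp.add_apply, PiLp.smul_apply, smul_eq_mul]
    positivity
  · simp [Finset.sum_add_distrib, ← Finset.mul_sum, hx.2, hy.2, hab]

section Projection

variable {E : Type*} [NormedAddCommGroup E] [InnerProductSpace ℝ E] {K : Set E}

/-- Variational characterization of a nearest point of a convex set. -/
theorem Convex.inner_sub_le_zero_of_forall_norm_sub_le (hK : Convex ℝ K) {w p : E} (hp : p ∈ K)
    (hmin : ∀ z ∈ K, ‖w - p‖ ≤ ‖w - z‖) {z : E} (hz : z ∈ K) : ⟪w - p, z - p⟫ ≤ 0 := by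
  have : Nonempty K := ⟨⟨p, hp⟩⟩
  refine (norm_eq_iInf_iff_real_inner_le_zero hK hp).1 (le_antisymm ?_ ?_) z hz
  · exact le_ciInf fun z => hmin z z.2
  · exact ciInf_le (f := fun z : K => ‖w - z‖)
      ⟨0, Set.forall_mem_range.2 fun _ => norm_nonneg _⟩ ⟨p, hp⟩

/-- A nearest-point map onto a convex set is firmly nonexpansive. -/
theorem Convex.norm_sub_sq_le_inner_of_forall_norm_sub_le (hK : Convex ℝ K) {P : E → E}
    (hP : ∀ w, P w ∈ K ∧ ∀ z ∈ K, ‖w - P w‖ ≤ ‖w - z‖) (x y : E) :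
    ‖P x - P y‖ ^ 2 ≤ ⟪x - y, P x - P y⟫ := by
  have hx := hK.inner_sub_le_zero_of_forall_norm_sub_le (hP x).1 (hP x).2 (hP y).1
  have hy := hK.inner_sub_le_zero_of_forall_norm_sub_le (hP y).1 (hP y).2 (hP x).1
  rw [← real_inner_self_eq_norm_sq]
  simp only [inner_sub_left, inner_sub_right] at *
  linarith

/-- A nearest-point map onto a convex set is nonexpansive. -/
theorem Convex.lipschitzWith_one_of_forall_norm_sub_le (hK : Convex ℝ K) {P : E → E}
    (hP : ∀ w, P w ∈ K ∧ ∀ z ∈ K, ‖w - P w‖ ≤ ‖w - z‖) : LipschitzWith 1 P := by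
  refine LipschitzWith.mk_one fun x y => ?_
  rw [dist_eq_norm, dist_eq_norm]
  have h := (hK.norm_sub_sq_le_inner_of_forall_norm_sub_le hP x y).trans
    (real_inner_le_norm _ _)
  by_contra! hlt
  nlinarith [norm_nonneg (x - y)]

end Projection

/-- Let `Π_Δ` be the Euclidean projection onto the standard simplex
`Δ`, and let `μ, v ∈ ℝⁿ`. Then `φ(ν) = μᵀ Π_Δ(v + ν μ)` is nondecreasing and continuous
on `ℝ`. -/
theorem dual_path_monotone_continuous {n : ℕ}
    (projD : EuclideanSpace ℝ (Fin n) → EuclideanSpace ℝ (Fin n))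
    (hproj : ∀ w, projD w ∈ stdSimplex' n ∧ ∀ z ∈ stdSimplex' n, ‖w - projD w‖ ≤ ‖w - z‖)
    (μ v : EuclideanSpace ℝ (Fin n)) :
    Monotone (fun ν : ℝ => ∑ i, μ i * projD (v + ν • μ) i) ∧
      Continuous (fun ν : ℝ => ∑ i, μ i * projD (v + ν • μ) i) := by
  have hK := convex_stdSimplex' n
  have hsum (w : EuclideanSpace ℝ (Fin n)) : ∑ i, μ i * w i = ⟪μ, w⟫ := by
    simp [PiLp.inner_apply, mul_comm]
  simp only [hsum]
  refine ⟨fun a b hab => ?_, ?_⟩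
  · rcases hab.eq_or_lt with rfl | hlt
    · exact le_rfl
    have h := (sq_nonneg _).trans
      (hK.norm_sub_sq_le_inner_of_forall_norm_sub_le hproj (v + b • μ) (v + a • μ))
    rw [add_sub_add_left_eq_sub, ← sub_smul, real_inner_smul_left, inner_sub_right] at h
    exact sub_nonneg.1 (nonneg_of_mul_nonneg_right h (sub_pos.2 hlt))
  · have hcont := (hK.lipschitzWith_one_of_forall_norm_sub_le hproj).continuous
    fun_prop
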